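/- Let ε ∈ {1, −1}, let Ω ⊆ ℂ ∖ {0} be open, and let u : Ω → ℂ be a holomorphic solution of the Boutroux form of PII, ü = 2u³ + u + 2α/(3z) − u̇/z + u/(9z²), with parameter α ∈ ℂ. Suppose D(z) := 3z·u(z)² + ε·u(z) + 3εz·u̇(z) + 3z/2 ≠ 0 for all z ∈ Ω. Then ū(z) := −u(z) − (2α + ε)/D(z) is a holomorphic solution on Ω of the Boutroux form of PII with parameter α + ε. -/

import Mathlib

/-!
For `ε = ±1` the denominator `p = 3zu² + εu + 3εz·u̇ + 3z/2` is a canonical momentum for `u`: the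
Boutroux form of PII with parameter `α` is equivalent to the system `u̇ = ∂H/∂p`, `ṗ = -∂H/∂u` with
Okamoto's Hamiltonian
`H = ε(p²/(6z) - u²p - p/2) - up/(3z) - ε(2α + ε)u`.
Keeping `p` and replacing `u` by `-u - (2α + ε)/p` turns the system with parameters `(ε, α)` into
the one with parameters `(-ε, α + ε)`. Eliminating `p` again gives PII with parameter `α + ε`.
-/

variable {𝕜 : Type*} [NontriviallyNormedField 𝕜] {ε α : 𝕜} {Ω : Set 𝕜} {u p : 𝕜 → 𝕜}

/-- Solutions on `Ω` of the Boutroux form of PII with parameter `α`. The second-order equation is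
a `HasDerivAt` statement about `deriv u`, so that twice differentiability is part of it. -/
structure IsBoutrouxPII (α : 𝕜) (Ω : Set 𝕜) (u : 𝕜 → 𝕜) : Prop where
  differentiableOn : DifferentiableOn 𝕜 u Ω
  hasDerivAt_deriv : ∀ z ∈ Ω, HasDerivAt (deriv u)
    (2 * u z ^ 3 + u z + 2 * α / (3 * z) - deriv u z / z + u z / (9 * z ^ 2)) z

/-- Solutions `(u, p)` on `Ω` of the Hamiltonian form of PII in Boutroux variables, where `u` is
the position and `p` the momentum; it links a solution of PII to its Bäcklund transform.
The sign `ε` selects one of the two Hamiltonians. -/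
structure IsBoutrouxHamiltonian (ε α : 𝕜) (Ω : Set 𝕜) (u p : 𝕜 → 𝕜) : Prop where
  hasDerivAt_position : ∀ z ∈ Ω, HasDerivAt u
    (ε * (p z / (3 * z) - u z ^ 2 - 1 / 2) - u z / (3 * z)) z
  hasDerivAt_momentum : ∀ z ∈ Ω, HasDerivAt p
    (2 * ε * u z * p z + p z / (3 * z) + ε * (2 * α + ε)) z

/-- The momentum conjugate to a solution `u` of the Boutroux form of PII, which is the denominator
of the Bäcklund transformation. -/
noncomputable def boutrouxMomentum (ε : 𝕜) (u : 𝕜 → 𝕜) (z : 𝕜) : 𝕜 :=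
  3 * z * u z ^ 2 + ε * u z + 3 * ε * z * deriv u z + 3 * z / 2

/-- The Bäcklund transform `-u - (2α + ε)/p` of the position `u` with respect to the momentum `p`.
It takes the junk value `-u z` where `p z = 0`. -/
noncomputable def backlundTransform (ε α : 𝕜) (u p : 𝕜 → 𝕜) (z : 𝕜) : 𝕜 :=
  -u z - (2 * α + ε) / p z

theorem hasDerivAt_boutrouxMomentum {z u'' : 𝕜} (hu : DifferentiableAt 𝕜 u z)
    (hu' : HasDerivAt (deriv u) u'' z) :
    HasDerivAt (boutrouxMomentum ε u)
      (3 * u z ^ 2 + 6 * z * u z * deriv u z + 4 * ε * deriv u z + 3 * ε * z * u'' + 3 / 2) z := by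
  have hid := hasDerivAt_id' z
  have hsum := ((((hid.const_mul 3).mul (hu.hasDerivAt.pow 2)).add
    (hu.hasDerivAt.const_mul ε)).add ((hid.const_mul (3 * ε)).mul hu')).add
    ((hid.const_mul 3).div_const 2)
  refine hsum.congr_deriv ?_
  simp only [Pi.pow_apply]
  push_cast
  ring

theorem IsBoutrouxPII.isBoutrouxHamiltonian [NeZero (2 : 𝕜)] [NeZero (3 : 𝕜)] (hε : ε ^ 2 = 1)
    (hΩ : IsOpen Ω) (hΩ0 : ∀ z ∈ Ω, z ≠ 0) (hu : IsBoutrouxPII α Ω u) :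
    IsBoutrouxHamiltonian ε α Ω u (boutrouxMomentum ε u) where
  hasDerivAt_position z hz := by
    have hz0 := hΩ0 z hz
    have hdiff := hu.differentiableOn.differentiableAt (hΩ.mem_nhds hz)
    refine hdiff.hasDerivAt.congr_deriv ?_
    have hmomentum : boutrouxMomentum ε u z / (3 * z) =
        u z ^ 2 + ε * u z / (3 * z) + ε * deriv u z + 1 / 2 := by
      rw [boutrouxMomentum]
      field_simp
    rw [hmomentum]
    linear_combination (-(deriv u z) - u z / (3 * z)) * hε
  hasDerivAt_momentum z hz := by
    have hz0 := hΩ0 z hz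
    have hdiff := hu.differentiableOn.differentiableAt (hΩ.mem_nhds hz)
    refine (hasDerivAt_boutrouxMomentum hdiff (hu.hasDerivAt_deriv z hz)).congr_deriv ?_
    -- `field_simp` derives `9 ≠ 0` from `3 ≠ 0` only through this factorization.
    rw [boutrouxMomentum, show (9 : 𝕜) = 3 ^ 2 by norm_num]
    field_simp
    linear_combination (-6 * z * (1 + 2 * u z ^ 2 + 6 * z * u z * deriv u z)) * hε

theorem IsBoutrouxHamiltonian.backlund (h : IsBoutrouxHamiltonian ε α Ω u p)
    (hp : ∀ z ∈ Ω, p z ≠ 0) :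
    IsBoutrouxHamiltonian (-ε) (α + ε) Ω (backlundTransform ε α u p) p where
  hasDerivAt_position z hz := by
    have hpz := hp z hz
    have hquot := (hasDerivAt_const z (2 * α + ε)).div (h.hasDerivAt_momentum z hz) hpz
    refine ((h.hasDerivAt_position z hz).neg.sub hquot).congr_deriv ?_
    rw [backlundTransform]
    field_simp
    ring
  hasDerivAt_momentum z hz := by
    have hcancel : (2 * α + ε) / p z * p z = 2 * α + ε := div_mul_cancel₀ _ (hp z hz)
    refine (h.hasDerivAt_momentum z hz).congr_deriv ?_
    rw [backlundTransform]
    linear_combination (-2 * ε) * hcancel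

theorem IsBoutrouxHamiltonian.isBoutrouxPII [NeZero (2 : 𝕜)] [NeZero (3 : 𝕜)] (hε : ε ^ 2 = 1)
    (hΩ : IsOpen Ω) (hΩ0 : ∀ z ∈ Ω, z ≠ 0) (h : IsBoutrouxHamiltonian ε α Ω u p) :
    IsBoutrouxPII α Ω u where
  differentiableOn z hz := (h.hasDerivAt_position z hz).differentiableAt.differentiableWithinAt
  hasDerivAt_deriv z hz := by
    have hz0 := hΩ0 z hz
    have hu := h.hasDerivAt_position z hz
    have hderiv : deriv u =ᶠ[nhds z]
        fun y => ε * (p y / (3 * y) - u y ^ 2 - 1 / 2) - u y / (3 * y) := by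
      filter_upwards [hΩ.mem_nhds hz] with y hy using (h.hasDerivAt_position y hy).deriv
    have h3z : HasDerivAt (fun y : 𝕜 => 3 * y) 3 z := by
      simpa using (hasDerivAt_id' z).const_mul 3
    have hrhs := (((((h.hasDerivAt_momentum z hz).div h3z (mul_ne_zero three_ne_zero hz0)).sub
      (hu.pow 2)).sub_const (1 / 2)).const_mul ε).sub (hu.div h3z (mul_ne_zero three_ne_zero hz0))
    refine (hrhs.congr_of_eventuallyEq hderiv).congr_deriv ?_
    rw [hu.deriv, show (9 : 𝕜) = 3 ^ 2 by norm_num]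
    push_cast
    field_simp
    linear_combination (6 * z * (6 * z * u z ^ 3 + 3 * z * u z + 2 * α + ε)) * hε

theorem backlund_boutroux_painleveII_general [NeZero (2 : 𝕜)] [NeZero (3 : 𝕜)] (hε : ε ^ 2 = 1)
    (hΩ : IsOpen Ω) (hΩ0 : ∀ z ∈ Ω, z ≠ 0) (hu : IsBoutrouxPII α Ω u)
    (hD : ∀ z ∈ Ω, boutrouxMomentum ε u z ≠ 0) :
    IsBoutrouxPII (α + ε) Ω (backlundTransform ε α u (boutrouxMomentum ε u)) :=
  ((hu.isBoutrouxHamiltonian hε hΩ hΩ0).backlund hD).isBoutrouxPII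
    ((neg_sq ε).trans hε) hΩ hΩ0

/-- Bäcklund transformation of the Boutroux form of PII: if `u` is a holomorphic
solution of `ü = 2u³ + u + 2α/(3z) - u̇/z + u/(9z²)` on an open set
`Ω ⊆ ℂ ∖ {0}`, `ε = ±1`, and `D = 3zu² + εu + 3εz·u̇ + 3z/2` is nowhere zero on
`Ω`, then `ū = -u - (2α + ε)/D` is a holomorphic solution on `Ω` of the Boutroux
form of PII with parameter `α + ε`. -/
theorem backlund_boutroux_painleveII
    (ε : ℂ) (hε : ε = 1 ∨ ε = -1) (Ω : Set ℂ) (hΩ : IsOpen Ω)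
    (hΩ0 : ∀ z ∈ Ω, z ≠ 0) (α : ℂ)
    (u : ℂ → ℂ) (hu : DifferentiableOn ℂ u Ω)
    (hueq : ∀ z ∈ Ω, HasDerivAt (deriv u)
      (2 * u z ^ 3 + u z + 2 * α / (3 * z) - deriv u z / z + u z / (9 * z ^ 2)) z)
    (hD : ∀ z ∈ Ω,
      3 * z * u z ^ 2 + ε * u z + 3 * ε * z * deriv u z + 3 * z / 2 ≠ 0) :
    DifferentiableOn ℂ
        (fun z => -u z - (2 * α + ε) /
          (3 * z * u z ^ 2 + ε * u z + 3 * ε * z * deriv u z + 3 * z / 2)) Ω ∧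
      ∀ z ∈ Ω,
        HasDerivAt
          (deriv fun z => -u z - (2 * α + ε) /
            (3 * z * u z ^ 2 + ε * u z + 3 * ε * z * deriv u z + 3 * z / 2))
          (2 * (-u z - (2 * α + ε) /
              (3 * z * u z ^ 2 + ε * u z + 3 * ε * z * deriv u z + 3 * z / 2)) ^ 3
            + (-u z - (2 * α + ε) /
              (3 * z * u z ^ 2 + ε * u z + 3 * ε * z * deriv u z + 3 * z / 2))
            + 2 * (α + ε) / (3 * z)
            - deriv (fun z => -u z - (2 * α + ε) /
              (3 * z * u z ^ 2 + ε * u z + 3 * ε * z * deriv u z + 3 * z / 2)) z / z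
            + (-u z - (2 * α + ε) /
              (3 * z * u z ^ 2 + ε * u z + 3 * ε * z * deriv u z + 3 * z / 2))
              / (9 * z ^ 2)) z := by
  have h := backlund_boutroux_painleveII_general (sq_eq_one_iff.2 hε) hΩ hΩ0 ⟨hu, hueq⟩ hD
  exact ⟨h.differentiableOn, h.hasDerivAt_deriv⟩
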